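/- Let (A, α, γ) be a graded C*-dynamical system, 𝐀 = A ⋊_γ ℤ₂ its Z₂-crossed product with extended dynamics 𝛂, and β ∈ ℝ. The map sending an (𝛂, β)-KMS state 𝛚 on 𝐀 to the pair (ω, ρ) with ω = 𝛚|_{A⊕0} and ρ = 𝛚|_{0⊕A} is a bijection from the set of (𝛂, β)-KMS states on 𝐀 onto the set of pairs (ω, ρ) where ω is a γ-invariant (α, β)-KMS state on A and ρ is a hermitian γ-twisted (α, β)-KMS functional on A dominated by ω. Its inverse sends (ω, ρ) to the state 𝛚(a, b) = ω(a) + ρ(b). -/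

import Mathlib

open scoped InnerProductSpace ComplexOrder

noncomputable section

/-- A strongly continuous one-parameter group of *-automorphisms of a unital C*-algebra. -/
structure Dynamics (A : Type*) [CStarAlgebra A] where
  α : ℝ → A ≃⋆ₐ[ℂ] A
  α_zero : ∀ a, α 0 a = a
  α_add : ∀ s t a, α (s + t) a = α s (α t a)
  α_cont : ∀ a, Continuous fun t => α t a

variable {A : Type*} [CStarAlgebra A]

/-- `f` is the entire analytic extension of `t ↦ α_t a`; an element admitting such an
extension is an entire analytic element for the dynamics. -/
def Dynamics.IsAnalyticExt (d : Dynamics A) (a : A) (f : ℂ → A) : Prop :=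
  Differentiable ℂ f ∧ ∀ t : ℝ, f (t : ℂ) = d.α t a

/-- A state: positive normalized linear functional. -/
def IsState (ω : A → ℂ) : Prop :=
  IsLinearMap ℂ ω ∧ (∀ a : A, 0 ≤ ω (star a * a)) ∧ ω 1 = 1

/-- The `(α, β)`-KMS condition: `ω (a * α_{iβ}(b)) = ω (b * a)` for entire analytic `a, b`. -/
def Dynamics.IsKMS (d : Dynamics A) (β : ℝ) (ω : A → ℂ) : Prop :=
  IsState ω ∧ ∀ a b : A, ∀ fa fb : ℂ → A, d.IsAnalyticExt a fa → d.IsAnalyticExt b fb →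
    ω (a * fb (Complex.I * β)) = ω (b * a)

/-- A graded C*-dynamical system: dynamics plus a commuting involutive grading. -/
structure GradedDyn (A : Type*) [CStarAlgebra A] extends Dynamics A where
  γ : A ≃⋆ₐ[ℂ] A
  γ_invol : ∀ a, γ (γ a) = a
  γ_comm : ∀ t a, γ (α t a) = α t (γ a)

/-- The `γ`-twisted `(α, β)`-KMS condition: `ρ (a * α_{iβ}(b)) = ρ (b * γ a)`. -/
def Dynamics.IsTwistedKMS (d : Dynamics A) (γ : A ≃⋆ₐ[ℂ] A) (β : ℝ) (ρ : A → ℂ) : Prop :=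
  IsLinearMap ℂ ρ ∧ ∀ a b : A, ∀ fa fb : ℂ → A, d.IsAnalyticExt a fa → d.IsAnalyticExt b fb →
    ρ (a * fb (Complex.I * β)) = ρ (b * γ a)

/-- Hermitian functional: `ρ(a*) = conj (ρ a)`. -/
def IsHermitian (ρ : A → ℂ) : Prop := ∀ a, ρ (star a) = starRingEnd ℂ (ρ a)

/-- `ρ` is dominated by `ω`: `|ρ(a* b)|² ≤ ω(a* a) ω(b* b)`. -/
def Dominated (ω ρ : A → ℂ) : Prop :=
  ∀ a b : A, (‖ρ (star a * b)‖ : ℂ) ^ 2 ≤ ω (star a * a) * ω (star b * b)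

/-- The set `F_β(A, α, γ, ω)`: hermitian `γ`-twisted `(α,β)`-KMS functionals dominated by `ω`. -/
def TwistedKMSDom (d : Dynamics A) (γ : A ≃⋆ₐ[ℂ] A) (β : ℝ) (ω ρ : A → ℂ) : Prop :=
  d.IsTwistedKMS γ β ρ ∧ IsHermitian ρ ∧ Dominated ω ρ

/-- Product of the `ℤ₂`-crossed product `A ⋊_γ ℤ₂` realized on `A ⊕ A`. -/
def cpMul (γ : A ≃⋆ₐ[ℂ] A) (p q : A × A) : A × A :=
  (p.1 * q.1 + p.2 * γ q.2, p.1 * q.2 + p.2 * γ q.1)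

/-- Involution of the crossed product. -/
def cpStar (γ : A ≃⋆ₐ[ℂ] A) (p : A × A) : A × A := (star p.1, γ (star p.2))

/-- Unit of the crossed product. -/
def cpOne : A × A := (1, 0)

/-- A state on the crossed product. -/
def cpIsState (γ : A ≃⋆ₐ[ℂ] A) (W : A × A → ℂ) : Prop :=
  IsLinearMap ℂ W ∧ (∀ p : A × A, 0 ≤ W (cpMul γ (cpStar γ p) p)) ∧ W (cpOne : A × A) = 1

/-- Entire analytic extension for the componentwise extended dynamics `𝛂` on `A ⊕ A`. -/
def cpIsAnalyticExt (d : Dynamics A) (p : A × A) (f : ℂ → A × A) : Prop :=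
  Differentiable ℂ f ∧ ∀ t : ℝ, f (t : ℂ) = (d.α t p.1, d.α t p.2)

/-- `(𝛂, β)`-KMS states of the crossed product `A ⋊_γ ℤ₂`. -/
def cpIsKMS (d : Dynamics A) (γ : A ≃⋆ₐ[ℂ] A) (β : ℝ) (W : A × A → ℂ) : Prop :=
  cpIsState γ W ∧ ∀ p q : A × A, ∀ fp fq : ℂ → A × A,
    cpIsAnalyticExt d p fp → cpIsAnalyticExt d q fq →
    W (cpMul γ p (fq (Complex.I * β))) = W (cpMul γ q p)

/-!
For a state `W` restricting to `ω` and `ρ`, `(p, q) ↦ W (p* q)` is a nonnegative sesquilinear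
form on `A ⊕ A`, so the Cauchy–Schwarz inequality and hermitian symmetry for `p = (a, 0)` and
`q = (0, b)` say that `ρ` is dominated by `ω` and hermitian, provided that `ω` and `ρ` are
`γ`-invariant. Invariance is a consequence of the KMS condition: the unitary `(0, 1)` is fixed
by the dynamics and implements `γ`, which gives `ω (γ a) = ω a` for entire analytic `a`, and
putting `b = 1` in the twisted condition gives the same for `ρ`. Gaussian smoothing of orbits
shows that the entire analytic elements are dense, and `ω` and `ρ` are continuous, the first by
positivity and the second by domination. Conversely, `ω (a* a) + ω (b* b) + 2 Re ρ (a* b) ≥ 0`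
follows from domination by the inequality of arithmetic and geometric means, and this is the
positivity of `(a, b) ↦ ω a + ρ b`.
-/

open Complex Filter MeasureTheory Topology
open scoped BoundedContinuousFunction CStarAlgebra

section Sesquilinear

variable {V : Type*} [AddCommGroup V] [Module ℂ V] {B : V →ₗ⋆[ℂ] V →ₗ[ℂ] ℂ}

theorem isSymm_of_isNonneg (hB : B.IsNonneg) : B.IsSymm := by
  have im_self (x : V) : (B x x).im = 0 := (nonneg_iff.1 (hB.nonneg x)).2.symm
  refine ⟨fun x y => Complex.ext ?_ ?_⟩
  · have re_symm : (B x y).re + -(B y x).re = 0 := by simpa [im_self] using im_self (x + I • y)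
    rw [conj_re]
    linarith
  · have im_antisymm : (B x y).im + (B y x).im = 0 := by simpa [im_self] using im_self (x + y)
    rw [conj_im]
    linarith

theorem norm_sq_le_mul_of_isNonneg (hB : B.IsNonneg) (x y : V) :
    (‖B x y‖ : ℂ) ^ 2 ≤ B x x * B y y := by
  let core : PreInnerProductSpace.Core ℂ V :=
    { inner := fun x y => B x y
      conj_inner_symm := fun x y => (isSymm_of_isNonneg hB).eq y x
      re_inner_nonneg := fun x => (nonneg_iff.1 (hB.nonneg x)).1
      add_left := fun x y z => by simp
      smul_left := fun x y c => by simp }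
  have cauchy_schwarz : ‖B x y‖ * ‖B y x‖ ≤ (B x x).re * (B y y).re :=
    InnerProductSpace.Core.inner_mul_inner_self_le (c := core) x y
  have norm_symm : ‖B y x‖ = ‖B x y‖ := by
    rw [← (isSymm_of_isNonneg hB).eq x y, RCLike.norm_conj]
  rw [norm_symm, ← sq] at cauchy_schwarz
  rw [eq_re_of_ofReal_le (hB.nonneg x), eq_re_of_ofReal_le (hB.nonneg y)]
  exact_mod_cast cauchy_schwarz

theorem add_add_add_conj_nonneg {x y z : ℂ} (hx : 0 ≤ x) (hy : 0 ≤ y)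
    (hz : (‖z‖ : ℂ) ^ 2 ≤ x * y) : 0 ≤ x + y + (z + starRingEnd ℂ z) := by
  lift x to ℝ using (nonneg_iff.1 hx).2.symm
  lift y to ℝ using (nonneg_iff.1 hy).2.symm
  rw [add_conj]
  norm_cast at hx hy hz ⊢
  have two_norm_le : 2 * ‖z‖ ≤ x + y :=
    le_of_sq_le_sq (by nlinarith [four_mul_le_sq_add x y]) (by positivity)
  linarith [neg_le_of_abs_le (abs_re_le_norm z)]

end Sesquilinear

section GaussianTransform

variable {E : Type*} [NormedAddCommGroup E] [NormedSpace ℂ E]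

theorem abs_mul_exp_mul_le_exp_add_exp {x s c : ℝ} (hx : |x| + 1 ≤ c) :
    |s| * Real.exp (x * s) ≤ Real.exp (c * s) + Real.exp (-c * s) := by
  calc |s| * Real.exp (x * s)
      ≤ Real.exp |s| * Real.exp |x * s| := by
        gcongr
        · linarith [Real.add_one_le_exp |s|]
        · exact le_abs_self _
    _ = Real.exp ((|x| + 1) * |s|) := by
        rw [← Real.exp_add, abs_mul]
        ring_nf
    _ ≤ Real.exp |c * s| := by
        rw [abs_mul]
        gcongr
        exact hx.trans (le_abs_self c)
    _ ≤ Real.exp (c * s) + Real.exp (-c * s) := by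
        rw [neg_mul]
        exact Real.exp_abs_le _

theorem differentiable_integral_cexp_mul_smul {μ : Measure ℝ} {g : ℝ → E}
    (hg : ∀ c : ℂ, Integrable (fun s : ℝ => cexp (c * s) • g s) μ) :
    Differentiable ℂ fun z : ℂ => ∫ s : ℝ, cexp (z * s) • g s ∂μ := by
  intro z₀
  have hg_meas : AEStronglyMeasurable g μ := by simpa using (hg 0).aestronglyMeasurable
  let c : ℝ := ‖z₀‖ + 2
  have deriv_bound (s : ℝ) (z : ℂ) (hz : z ∈ Metric.ball z₀ 1) :
      ‖(cexp (z * s) * s) • g s‖ ≤ ‖cexp (c * s) • g s‖ + ‖cexp (-c * s) • g s‖ := by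
    have hzc : |z.re| + 1 ≤ c := by
      have := norm_lt_of_mem_ball hz
      linarith [abs_re_le_norm z]
    have := abs_mul_exp_mul_le_exp_add_exp (s := s) hzc
    simp only [norm_smul, norm_mul, norm_exp, norm_real, Real.norm_eq_abs, ← add_mul]
    gcongr
    simpa [mul_comm] using this
  have hasDeriv (s : ℝ) (z : ℂ) :
      HasDerivAt (fun z : ℂ => cexp (z * s) • g s) ((cexp (z * s) * s) • g s) z :=
    ((hasDerivAt_mul_const (s : ℂ)).cexp).smul_const (g s)
  exact (hasDerivAt_integral_of_dominated_loc_of_deriv_le (Metric.ball_mem_nhds z₀ one_pos)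
    (.of_forall fun z => (hg z).aestronglyMeasurable) (hg z₀)
    ((by fun_prop : Continuous fun s : ℝ => cexp (z₀ * s) * s).aestronglyMeasurable.smul hg_meas)
    (.of_forall deriv_bound) ((hg c).norm.add (by simpa using (hg (-c)).norm))
    (.of_forall fun s z _ => hasDeriv s z)).2.differentiableAt

/-- The Gauss–Weierstrass transform of `u`, without its normalizing factor and extended to complex
arguments; `k` is the inverse squared width of the Gaussian. -/
def gaussianTransform (k : ℝ) (u : ℝ → E) (z : ℂ) : E :=
  ∫ s : ℝ, cexp (-k * (s - z) ^ 2) • u s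

theorem integrable_cexp_quadratic_smul {k : ℝ} (hk : 0 < k) (c : ℂ) (u : ℝ →ᵇ E) :
    Integrable fun s : ℝ => cexp (-k * s ^ 2 + c * s) • u s := by
  have hexp : Integrable fun s : ℝ => cexp (-k * s ^ 2 + c * s) := by
    simpa using integrable_cexp_quadratic (b := k) (by simpa using hk) c 0
  exact hexp.smul_bdd ‖u‖ u.continuous.aestronglyMeasurable (.of_forall u.norm_coe_le_norm)

theorem differentiable_gaussianTransform {k : ℝ} (hk : 0 < k) (u : ℝ →ᵇ E) :
    Differentiable ℂ (gaussianTransform k u) := by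
  have expand : gaussianTransform k u = fun z : ℂ =>
      cexp (-k * z ^ 2) • ∫ s : ℝ, cexp (2 * k * z * s) • cexp (-k * s ^ 2) • u s := by
    ext z
    simp only [gaussianTransform, ← integral_smul, smul_smul, ← Complex.exp_add]
    congr! 4
    ring
  have laplace : Differentiable ℂ fun w : ℂ =>
      ∫ s : ℝ, cexp (w * s) • cexp (-k * s ^ 2) • u s :=
    differentiable_integral_cexp_mul_smul fun c => by
      simpa only [smul_smul, ← Complex.exp_add, add_comm] using
        integrable_cexp_quadratic_smul hk c u
  rw [expand]
  exact (by fun_prop : Differentiable ℂ fun z : ℂ => cexp (-k * z ^ 2)).smul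
    (laplace.comp (by fun_prop : Differentiable ℂ fun z : ℂ => 2 * k * z))

theorem tendsto_smul_gaussianTransform_zero [CompleteSpace E] (u : ℝ →ᵇ E) :
    Tendsto (fun c : ℝ => (Real.pi * c : ℂ) ^ (1 / 2 : ℂ) •
      gaussianTransform (Real.pi ^ 2 * c + 1) u 0) atTop (𝓝 (u 0)) := by
  -- `u` need not be integrable; the factor `e^{-s²}` makes it so and does not change `u 0`
  have h_integrable : Integrable fun s : ℝ => cexp (-s ^ 2) • u s := by
    simpa using integrable_cexp_quadratic_smul one_pos 0 u
  have h_continuous : Continuous fun s : ℝ => cexp (-s ^ 2) • u s := by fun_prop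
  have approx := Real.tendsto_integral_gaussian_smul' h_integrable
    (h_continuous.continuousAt (x := 0))
  simp only [ofReal_zero, ne_eq, OfNat.ofNat_ne_zero, not_false_eq_true, zero_pow, neg_zero,
    Complex.exp_zero, one_smul] at approx
  convert approx using 2 with c
  simp only [gaussianTransform, ← integral_smul, smul_smul, mul_assoc, ← Complex.exp_add]
  congr! 4
  · simp
  · simp only [ofReal_add, ofReal_mul, ofReal_one, neg_add_rev, sub_zero, ← ofReal_pow, zero_sub,
      norm_neg, Real.norm_eq_abs, sq_abs, neg_mul]
    ring_nf

end GaussianTransform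

namespace Dynamics

variable (d : Dynamics A)

/-- The orbit `t ↦ α_t(a)`, bundled as a bounded continuous function. -/
def orbit (a : A) : ℝ →ᵇ A :=
  .ofNormedAddCommGroup (fun t => d.α t a) (d.α_cont a) ‖a‖
    fun t => NonUnitalStarAlgHom.norm_apply_le (d.α t) a

theorem isAnalyticExt_gaussianTransform_orbit {k : ℝ} (hk : 0 < k) (a : A) :
    d.IsAnalyticExt (gaussianTransform k (d.orbit a) 0) (gaussianTransform k (d.orbit a)) := by
  refine ⟨differentiable_gaussianTransform hk _, fun t => ?_⟩
  have h_integrable : Integrable fun s : ℝ => cexp (-k * (s - 0) ^ 2) • d.orbit a s := by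
    simpa using integrable_cexp_quadratic_smul hk 0 (d.orbit a)
  have map_integral := (⟨d.α t, map_continuous _⟩ : A →L[ℂ] A).integral_comp_comm h_integrable
  calc gaussianTransform k (d.orbit a) t
      = ∫ s : ℝ, cexp (-k * ((s + t : ℝ) - t) ^ 2) • d.orbit a (s + t) :=
        (integral_add_right_eq_self _ t).symm
    _ = ∫ s : ℝ, d.α t (cexp (-k * (s - 0) ^ 2) • d.orbit a s) := by
        congr! 2 with s
        simp [orbit, add_comm s t, d.α_add]
    _ = d.α t (gaussianTransform k (d.orbit a) 0) := map_integral

theorem IsAnalyticExt.map {B : Type*} [CStarAlgebra B] {d : Dynamics A} {e : Dynamics B}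
    (φ : A →L[ℂ] B) (hφ : ∀ t a, φ (d.α t a) = e.α t (φ a)) {a : A} {f : ℂ → A}
    (hf : d.IsAnalyticExt a f) : e.IsAnalyticExt (φ a) fun z => φ (f z) :=
  ⟨φ.differentiable.comp hf.1, fun t => by simp only [hf.2, hφ]⟩

theorem dense_setOf_isAnalyticExt : Dense {a : A | ∃ f, d.IsAnalyticExt a f} := fun a => by
  have approx := tendsto_smul_gaussianTransform_zero (d.orbit a)
  rw [show d.orbit a 0 = a from d.α_zero a] at approx
  refine mem_closure_of_tendsto approx ?_
  filter_upwards [eventually_ge_atTop 0] with c hc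
  exact ⟨_, (d.isAnalyticExt_gaussianTransform_orbit (by positivity) a).map
    ((Real.pi * c : ℂ) ^ (1 / 2 : ℂ) • .id ℂ A) fun t b => by simp⟩

theorem isAnalyticExt_zero : d.IsAnalyticExt 0 fun _ => 0 :=
  ⟨differentiable_const _, fun t => (map_zero (d.α t)).symm⟩

theorem isAnalyticExt_one : d.IsAnalyticExt 1 fun _ => 1 :=
  ⟨differentiable_const _, fun t => (map_one (d.α t)).symm⟩

variable {d}

theorem IsAnalyticExt.prodMk {a b : A} {f g : ℂ → A} (hf : d.IsAnalyticExt a f)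
    (hg : d.IsAnalyticExt b g) : cpIsAnalyticExt d (a, b) fun z => (f z, g z) :=
  ⟨hf.1.prodMk hg.1, fun t => by simp only [hf.2, hg.2]⟩

theorem IsTwistedKMS.apply_γ {γ : A ≃⋆ₐ[ℂ] A} {β : ℝ} {ρ : A → ℂ} (h : d.IsTwistedKMS γ β ρ)
    (hρ : Continuous ρ) (a : A) : ρ (γ a) = ρ a := by
  refine congrFun (Continuous.ext_on d.dense_setOf_isAnalyticExt
    (hρ.comp (map_continuous γ)) hρ ?_) a
  rintro a ⟨f, hf⟩
  simpa using (h.2 a 1 f _ hf d.isAnalyticExt_one).symm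

end Dynamics

theorem cpIsAnalyticExt.fst {d : Dynamics A} {p : A × A} {f : ℂ → A × A}
    (h : cpIsAnalyticExt d p f) : d.IsAnalyticExt p.1 fun z => (f z).1 :=
  ⟨h.1.fst, fun t => congrArg Prod.fst (h.2 t)⟩

theorem cpIsAnalyticExt.snd {d : Dynamics A} {p : A × A} {f : ℂ → A × A}
    (h : cpIsAnalyticExt d p f) : d.IsAnalyticExt p.2 fun z => (f z).2 :=
  ⟨h.1.snd, fun t => congrArg Prod.snd (h.2 t)⟩

theorem IsState.continuous {ω : A → ℂ} (h : IsState ω) : Continuous ω := by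
  let _ : PartialOrder A := CStarAlgebra.spectralOrder A
  have : StarOrderedRing A := CStarAlgebra.spectralOrderedRing A
  have map_nonneg (a : A) (ha : 0 ≤ a) : 0 ≤ h.1.mk' ω a := by
    obtain ⟨b, rfl⟩ := CStarAlgebra.nonneg_iff_eq_star_mul_self.1 ha
    exact h.2.1 b
  exact map_continuous (PositiveLinearMap.mk₀ (h.1.mk' ω) map_nonneg)

theorem Dominated.continuous {ω ρ : A → ℂ} (h : Dominated ω ρ) (hω : Continuous ω)
    (hω_zero : ω 0 = 0) (hρ : IsLinearMap ℂ ρ) : Continuous ρ := by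
  have norm_le (b : A) : ‖ρ b‖ ≤ √‖ω 1 * ω (star b * b)‖ := by
    refine Real.le_sqrt_of_sq_le ?_
    simpa using CStarAlgebra.norm_le_norm_of_nonneg_of_le (by positivity) (h 1 b)
  have bound_tendsto : Tendsto (fun b => √‖ω 1 * ω (star b * b)‖) (𝓝 0) (𝓝 0) := by
    have : Continuous fun b => √‖ω 1 * ω (star b * b)‖ := by fun_prop
    simpa [hω_zero] using this.tendsto 0
  refine continuous_of_continuousAt_zero (hρ.mk' ρ) ?_
  rw [ContinuousAt, map_zero]
  exact squeeze_zero_norm norm_le bound_tendsto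

theorem GradedDyn.isAnalyticExt_γ (S : GradedDyn A) {a : A} {f : ℂ → A}
    (hf : S.IsAnalyticExt a f) : S.IsAnalyticExt (S.γ a) fun z => S.γ (f z) :=
  hf.map (⟨S.γ, map_continuous S.γ⟩ : A →L[ℂ] A) S.γ_comm

theorem cpMul_cpStar (γ : A ≃⋆ₐ[ℂ] A) (p q : A × A) :
    cpMul γ (cpStar γ p) q =
      (star p.1 * q.1 + γ (star p.2 * q.2), star p.1 * q.2 + γ (star p.2 * q.1)) := by
  simp [cpMul, cpStar]

/-- The sesquilinear form `(p, q) ↦ W(p* q)` of a linear functional `W` on the crossed product. -/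
def cpForm (γ : A ≃⋆ₐ[ℂ] A) (W : A × A →ₗ[ℂ] ℂ) : A × A →ₗ⋆[ℂ] A × A →ₗ[ℂ] ℂ :=
  LinearMap.mk₂'ₛₗ (starRingEnd ℂ) (RingHom.id ℂ) (fun p q => W (cpMul γ (cpStar γ p) q))
    (fun p q r => by
      rw [← map_add]
      congr 1
      ext <;> simp [cpMul_cpStar, add_mul] <;> abel)
    (fun c p q => by
      rw [← map_smul]
      congr 1
      ext <;> simp [cpMul_cpStar])
    (fun p q r => by
      rw [← map_add]
      congr 1
      ext <;> simp [cpMul_cpStar, mul_add] <;> abel)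
    (fun c p q => by
      rw [← map_smul]
      congr 1
      ext <;> simp [cpMul_cpStar])

theorem isLinearMap_comp_inl {W : A × A → ℂ} (hW : IsLinearMap ℂ W) :
    IsLinearMap ℂ fun a => W (a, 0) :=
  (hW.mk' W ∘ₗ LinearMap.inl ℂ A A).isLinear

theorem isLinearMap_comp_inr {W : A × A → ℂ} (hW : IsLinearMap ℂ W) :
    IsLinearMap ℂ fun b => W (0, b) :=
  (hW.mk' W ∘ₗ LinearMap.inr ℂ A A).isLinear

namespace cpIsState

variable {γ : A ≃⋆ₐ[ℂ] A} {W : A × A → ℂ}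

theorem isNonneg_cpForm (h : cpIsState γ W) : (cpForm γ (h.1.mk' W)).IsNonneg := ⟨h.2.1⟩

theorem isState_fst (h : cpIsState γ W) : IsState fun a => W (a, 0) :=
  ⟨isLinearMap_comp_inl h.1, fun a => by simpa [cpMul_cpStar] using h.2.1 (a, 0), h.2.2⟩

theorem dominated_snd (h : cpIsState γ W) (hγ : ∀ a, W (γ a, 0) = W (a, 0)) :
    Dominated (fun a => W (a, 0)) fun b => W (0, b) := fun a b => by
  have := norm_sq_le_mul_of_isNonneg h.isNonneg_cpForm (a, 0) (0, b)
  simpa only [cpForm, LinearMap.mk₂'ₛₗ_apply, IsLinearMap.mk'_apply, cpMul_cpStar, star_zero,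
    zero_mul, mul_zero, map_zero, add_zero, zero_add, hγ] using this

theorem isHermitian_snd (h : cpIsState γ W) (hγ : ∀ b, W (0, γ b) = W (0, b)) :
    IsHermitian fun b => W (0, b) := fun b => by
  have := (isSymm_of_isNonneg h.isNonneg_cpForm).eq (1, 0) (0, b)
  simpa [cpForm, cpMul_cpStar, hγ] using this.symm

end cpIsState

namespace cpIsKMS

variable {S : GradedDyn A} {β : ℝ} {W : A × A → ℂ}

theorem isKMS_fst (h : cpIsKMS S.toDynamics S.γ β W) : S.IsKMS β fun a => W (a, 0) :=
  ⟨h.1.isState_fst, fun a b fa fb ha hb => by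
    simpa [cpMul] using
      h.2 _ _ _ _ (ha.prodMk S.isAnalyticExt_zero) (hb.prodMk S.isAnalyticExt_zero)⟩

theorem isTwistedKMS_snd (h : cpIsKMS S.toDynamics S.γ β W) :
    S.IsTwistedKMS S.γ β fun b => W (0, b) :=
  ⟨isLinearMap_comp_inr h.1.1, fun a b fa fb ha hb => by
    simpa [cpMul] using
      h.2 _ _ _ _ (ha.prodMk S.isAnalyticExt_zero) (S.isAnalyticExt_zero.prodMk hb)⟩

theorem fst_apply_γ (h : cpIsKMS S.toDynamics S.γ β W) (a : A) : W (S.γ a, 0) = W (a, 0) := by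
  have hW := h.1.isState_fst.continuous
  refine congrFun (Continuous.ext_on S.dense_setOf_isAnalyticExt
    (hW.comp (map_continuous S.γ)) hW ?_) a
  rintro a ⟨f, hf⟩
  -- the KMS condition for `(0, γ a)` and the unitary `(0, 1)`, which the dynamics fixes
  simpa [cpMul, S.γ_invol] using h.2 _ _ _ _ (S.isAnalyticExt_zero.prodMk (S.isAnalyticExt_γ hf))
    (S.isAnalyticExt_zero.prodMk S.isAnalyticExt_one)

theorem twistedKMSDom_snd (h : cpIsKMS S.toDynamics S.γ β W) :
    TwistedKMSDom S.toDynamics S.γ β (fun a => W (a, 0)) fun b => W (0, b) := by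
  have hdom := h.1.dominated_snd h.fst_apply_γ
  have hcont := hdom.continuous h.1.isState_fst.continuous h.1.1.map_zero h.isTwistedKMS_snd.1
  exact ⟨h.isTwistedKMS_snd, h.1.isHermitian_snd (h.isTwistedKMS_snd.apply_γ hcont), hdom⟩

end cpIsKMS

section Extension

variable {ω ρ : A → ℂ}

theorem isLinearMap_fst_add_snd (hω : IsLinearMap ℂ ω) (hρ : IsLinearMap ℂ ρ) :
    IsLinearMap ℂ fun q : A × A => ω q.1 + ρ q.2 :=
  ((hω.mk' ω).coprod (hρ.mk' ρ)).isLinear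

theorem cpIsState_fst_add_snd {γ : A ≃⋆ₐ[ℂ] A} (hω : IsState ω) (hωγ : ∀ a, ω (γ a) = ω a)
    (hρ : IsLinearMap ℂ ρ) (hρ_herm : IsHermitian ρ) (hργ : ∀ a, ρ (γ a) = ρ a)
    (hdom : Dominated ω ρ) : cpIsState γ fun q => ω q.1 + ρ q.2 := by
  refine ⟨isLinearMap_fst_add_snd hω.1 hρ, fun ⟨a, b⟩ => ?_, by simp [cpOne, hω.2.2, hρ.map_zero]⟩
  have cross_symm : ρ (star b * a) = starRingEnd ℂ (ρ (star a * b)) := by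
    rw [← hρ_herm, star_mul, star_star]
  simp only [cpMul_cpStar, hω.1.map_add, hρ.map_add, hωγ, hργ, cross_symm]
  exact add_add_add_conj_nonneg (hω.2.1 a) (hω.2.1 b) (hdom a b)

theorem cpIsKMS_fst_add_snd {S : GradedDyn A} {β : ℝ} (hω : S.IsKMS β ω)
    (hωγ : ∀ a, ω (S.γ a) = ω a) (hρ : TwistedKMSDom S.toDynamics S.γ β ω ρ) :
    cpIsKMS S.toDynamics S.γ β fun q => ω q.1 + ρ q.2 := by
  obtain ⟨htw, hherm, hdom⟩ := hρ
  have hργ := htw.apply_γ (hdom.continuous hω.1.continuous hω.1.1.map_zero htw.1)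
  refine ⟨cpIsState_fst_add_snd hω.1 hωγ htw.1 hherm hργ hdom, ?_⟩
  rintro ⟨a, b⟩ ⟨c, d⟩ fp fq hp hq
  have even_even := hω.2 _ _ _ _ hp.fst hq.fst
  have odd_odd : ω (b * S.γ (fq (I * β)).2) = ω (d * S.γ b) := by
    rw [hω.2 _ _ _ _ hp.snd (S.isAnalyticExt_γ hq.snd), ← hωγ, map_mul, S.γ_invol]
  have even_odd := htw.2 _ _ _ _ hp.fst hq.snd
  have odd_even : ρ (b * S.γ (fq (I * β)).1) = ρ (c * b) := by
    rw [htw.2 _ _ _ _ hp.snd (S.isAnalyticExt_γ hq.fst), ← map_mul, hργ]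
  simp only [cpMul, hω.1.1.map_add, htw.1.map_add, even_even, odd_odd, even_odd, odd_even]
  ring

end Extension

/-- The map `𝛚 ↦ (𝛚|_{A⊕0}, 𝛚|_{0⊕A})` is a bijection from the set of
`(𝛂, β)`-KMS states of the crossed product `A ⋊_γ ℤ₂` onto the set of pairs `(ω, ρ)`
with `ω` a `γ`-invariant `(α, β)`-KMS state on `A` and `ρ` a hermitian `γ`-twisted
`(α, β)`-KMS functional dominated by `ω`; its inverse sends `(ω, ρ)` to the state
`𝛚(a, b) = ω(a) + ρ(b)`. -/
theorem kms_states_crossed_product_bijection {A : Type*} [CStarAlgebra A]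
    (S : GradedDyn A) (β : ℝ) :
    Set.BijOn (fun W : A × A → ℂ => ((fun a => W (a, 0)), (fun b => W (0, b))))
      {W : A × A → ℂ | cpIsKMS S.toDynamics S.γ β W}
      {p : (A → ℂ) × (A → ℂ) |
        (S.toDynamics.IsKMS β p.1 ∧ ∀ a, p.1 (S.γ a) = p.1 a) ∧
        TwistedKMSDom S.toDynamics S.γ β p.1 p.2} ∧
    Set.InvOn (fun p : (A → ℂ) × (A → ℂ) => (fun q : A × A => p.1 q.1 + p.2 q.2))
      (fun W : A × A → ℂ => ((fun a => W (a, 0)), (fun b => W (0, b))))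
      {W : A × A → ℂ | cpIsKMS S.toDynamics S.γ β W}
      {p : (A → ℂ) × (A → ℂ) |
        (S.toDynamics.IsKMS β p.1 ∧ ∀ a, p.1 (S.γ a) = p.1 a) ∧
        TwistedKMSDom S.toDynamics S.γ β p.1 p.2} := by
  suffices inv : Set.InvOn _ _ _ _ from
    ⟨inv.bijOn (fun W hW => ⟨⟨hW.isKMS_fst, hW.fst_apply_γ⟩, hW.twistedKMSDom_snd⟩)
      (fun p hp => cpIsKMS_fst_add_snd hp.1.1 hp.1.2 hp.2), inv⟩
  constructor
  · intro W hW
    funext q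
    simp [← hW.1.1.map_add]
  · rintro ⟨ω, ρ⟩ ⟨⟨hω, -⟩, hρ⟩
    have hω_zero : ω 0 = 0 := hω.1.1.map_zero
    have hρ_zero : ρ 0 = 0 := hρ.1.1.map_zero
    simp [hω_zero, hρ_zero]

end
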